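/- Let (v₀¹,v₁) and (v₀²,v₂) be initialized pairs of clock valuations with (v₀¹,v₁) ≈ (v₀²,v₂). For any δ₁ ≥ 0 and any clock valuation v¹ with v¹ + δ₁ = v₁, there exist δ₂ ≥ 0 and a clock valuation v² such that: (1.1) v² + δ₂ = v₂ and (v₀¹,v¹) ≈ (v₀²,v²); (1.2) v¹ is initial iff v² is initial, v¹ = v₀¹ iff v² = v₀², and for every clock constraint c, v¹ satisfies c iff v² satisfies c (and likewise v₁ satisfies c iff v₂ satisfies c); (1.3) for every clock constraint c: (for all 0 ≤ δ' ≤ δ₁, v¹+δ' satisfies c) iff (for all 0 ≤ δ' ≤ δ₂, v²+δ' satisfies c). -/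

import Mathlib

open scoped BigOperators

namespace PTApaper

/-! ## Clock valuations -/

/-- A (raw) clock valuation on clocks `x_0, …, x_k`. -/
abbrev Val (k : ℕ) := Fin (k+1) → ℝ

/-- A discrete clock valuation. -/
abbrev DVal (k : ℕ) := Fin (k+1) → ℕ

/-- A clock valuation takes nonnegative values. -/
def IsVal {k : ℕ} (v : Val k) : Prop := ∀ i, 0 ≤ v i

/-- A valuation is initial if the auxiliary clock `x_0` has value 0. -/
def Initial {k : ℕ} (v : Val k) : Prop := v 0 = 0

/-- The integral part `int(v)` of a valuation. -/
noncomputable def intPart {k : ℕ} (v : Val k) : DVal k := fun i => (⌊v i⌋).toNat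

/-- The fractional parts of the relative representation `rel(v)`:
`fract(rel(v))(0) = fract (1 - fract (v 0))` and
`fract(rel(v))(i) = fract (fract (v i) + fract(rel(v))(0))` for `i ∈ K⁺`. -/
noncomputable def relFract {k : ℕ} (v : Val k) : Fin (k+1) → ℝ := fun i =>
  if i = 0 then Int.fract (1 - Int.fract (v 0))
  else Int.fract (Int.fract (v i) + Int.fract (1 - Int.fract (v 0)))

/-- Synchronous clock progress `v + δ`. -/
def shift {k : ℕ} (v : Val k) (δ : ℝ) : Val k := fun i => v i + δ

/-- Clock reset `v↓_r`. -/
def resetVal {k : ℕ} (r : Finset (Fin (k+1))) (v : Val k) : Val k :=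
  fun i => if i ∈ r then 0 else v i

/-! ## Patterns -/

/-- A raw pattern: a finite sequence of subsets of `K⁰ ∪ K¹`, where the index
`(i, false)` stands for `i⁰` and `(i, true)` stands for `i¹`. -/
abbrev PatSeq (k : ℕ) := List (Finset (Fin (k+1) × Bool))

/-- The well-formedness conditions making `η = p₀,…,p_n` a pattern:
`0 ≤ n < 2(k+1)`, the `p_m` are nonempty and pairwise disjoint, `0⁰ ∈ p₀`,
and `p₀ ∪ … ∪ p_n = K⁰ ∪ K¹`. -/
def IsPattern {k : ℕ} (η : PatSeq k) : Prop :=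
  η.length ≤ 2*(k+1) ∧
  (∀ p ∈ η, p.Nonempty) ∧
  η.Pairwise Disjoint ∧
  ((0 : Fin (k+1)), false) ∈ η.getD 0 ∅ ∧
  (∀ x : Fin (k+1) × Bool, ∃ p ∈ η, x ∈ p)

/-- `bval v₀ v₁ b` is `v_b`. -/
def bval {k : ℕ} (v₀ v₁ : Val k) : Bool → Val k
  | false => v₀
  | true => v₁

/-- The defining ordering condition for "`(v₀,v₁)` has pattern `η = p₀,…,p_n`":
for all positions `m, m'`, copies `b, b'` and clocks `i, i'` with `i^b ∈ p_m` and
`i'^{b'} ∈ p_{m'}`, `fract(rel(v_b))(i) = fract(rel(v_{b'}))(i')` iff `m = m'`, and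
`fract(rel(v_b))(i) < fract(rel(v_{b'}))(i')` iff `m < m'`. -/
def HasPatternOrd {k : ℕ} (v₀ v₁ : Val k) (η : PatSeq k) : Prop :=
  ∀ m m' : Fin η.length, ∀ b b' : Bool, ∀ i i' : Fin (k+1),
    (i, b) ∈ η.get m → (i', b') ∈ η.get m' →
      ((relFract (bval v₀ v₁ b) i = relFract (bval v₀ v₁ b') i' ↔ m = m') ∧
       (relFract (bval v₀ v₁ b) i < relFract (bval v₀ v₁ b') i' ↔ (m : ℕ) < (m' : ℕ)))

/-- `(v₀,v₁)` has pattern `η` (written `[(v₀,v₁)] = η`). -/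
def PatternOf {k : ℕ} (v₀ v₁ : Val k) (η : PatSeq k) : Prop :=
  IsPattern η ∧ HasPatternOrd v₀ v₁ η

/-- A pattern is initial if it is the pattern of `(v₀,v₀)` for some initial valuation `v₀`. -/
def InitialPattern {k : ℕ} (η : PatSeq k) : Prop :=
  ∃ v₀ : Val k, IsVal v₀ ∧ Initial v₀ ∧ PatternOf v₀ v₀ η

/-- The equivalence `(v₀¹,v₁) ≈ (v₀²,v₂)`: same pattern and same integral parts. -/
def PairEquiv {k : ℕ} (va vb vc vd : Val k) : Prop :=
  (∃ η : PatSeq k, PatternOf va vb η ∧ PatternOf vc vd η) ∧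
  intPart va = intPart vc ∧ intPart vb = intPart vd

/-! ## now-position, Next, next, reset -/

/-- The index of the now-position, i.e. the position containing `0¹`. -/
def nowIdx {k : ℕ} (η : PatSeq k) : ℕ :=
  η.findIdx fun p => decide (((0 : Fin (k+1)), true) ∈ p)

/-- A merge-pattern: the now-position is the singleton `{0¹}`. -/
def IsMergePat {k : ℕ} (η : PatSeq k) : Prop :=
  η.getD (nowIdx η) ∅ = ({((0 : Fin (k+1)), true)} : Finset (Fin (k+1) × Bool))

/-- A split-pattern: a pattern that is not a merge-pattern. -/
def IsSplitPat {k : ℕ} (η : PatSeq k) : Prop := ¬ IsMergePat η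

/-- The next pattern `Next(η)`. -/
def NextPat {k : ℕ} (η : PatSeq k) : PatSeq k :=
  let i := nowIdx η
  if η.getD i ∅ = ({((0 : Fin (k+1)), true)} : Finset (Fin (k+1) × Bool)) then
    -- merge case : `p₀, …, p_{i-1} ∪ {0¹}, p_{i+1}, …, p_n`
    η.take (i-1) ++ [η.getD (i-1) ∅ ∪ {((0 : Fin (k+1)), true)}] ++ η.drop (i+1)
  else if i = 0 then
    -- split case with `i = 0` : `p₀ ∖ {0¹}, p₁, …, p_n, {0¹}`
    (η.getD 0 ∅ \ {((0 : Fin (k+1)), true)}) :: (η.drop 1 ++ [{((0 : Fin (k+1)), true)}])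
  else
    -- split case with `i > 0` : `p₀, …, p_{i-1}, {0¹}, p_i ∖ {0¹}, p_{i+1}, …, p_n`
    η.take i ++ [{((0 : Fin (k+1)), true)}, η.getD i ∅ \ {((0 : Fin (k+1)), true)}]
      ++ η.drop (i+1)

/-- The counter update of `next(η,u)`. -/
def nextD {k : ℕ} (η : PatSeq k) (u : DVal k) : DVal k :=
  let i := nowIdx η
  if η.getD i ∅ = ({((0 : Fin (k+1)), true)} : Finset (Fin (k+1) × Bool)) then
    fun j =>
      if j = 0 then (if i = 1 then u 0 + 1 else u 0)
      else (if (j, true) ∈ η.getD (i-1) ∅ then u j + 1 else u j)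
  else u

/-- `next(η,u)`. -/
def nextPair {k : ℕ} (η : PatSeq k) (u : DVal k) : PatSeq k × DVal k :=
  (NextPat η, nextD η u)

/-- The pattern part of `reset_r(η,u)`: all indices `j¹`, `j ∈ r`, are moved into the
now-position, and entries that become empty are deleted. -/
def ResetPat {k : ℕ} (r : Finset (Fin (k+1))) (η : PatSeq k) : PatSeq k :=
  let r1 : Finset (Fin (k+1) × Bool) := r.image (fun j => (j, true))
  let i := nowIdx η
  (η.mapIdx (fun m p => if m = i then p ∪ r1 else p \ r1)).filter (fun p => decide (p ≠ ∅))

/-- The counter update of `reset_r(η,u)`. -/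
def resetD {k : ℕ} (r : Finset (Fin (k+1))) (u : DVal k) : DVal k :=
  fun j => if j ∈ r then 0 else u j

/-- `reset_r(η,u)`. -/
def resetPair {k : ℕ} (r : Finset (Fin (k+1))) (η : PatSeq k) (u : DVal k) :
    PatSeq k × DVal k :=
  (ResetPat r η, resetD r u)

/-! ## Pattern changes -/

/-- `v` has no pattern change for `δ`. -/
def NoChange {k : ℕ} (v₀ v : Val k) (δ : ℝ) : Prop :=
  ∃ η : PatSeq k, PatternOf v₀ v η ∧
    ∀ δ', 0 ≤ δ' → δ' ≤ δ → PatternOf v₀ (shift v δ') η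

/-- `v` has one pattern change for `δ`. -/
def OneChange {k : ℕ} (v₀ v : Val k) (δ : ℝ) : Prop :=
  ∃ η η' : PatSeq k, PatternOf v₀ v η ∧ PatternOf v₀ (shift v δ) η' ∧
    NextPat η = η' ∧
    ((∀ δ', 0 < δ' → δ' < δ → PatternOf v₀ (shift v δ') η) ∨
     (∀ δ', 0 < δ' → δ' < δ → PatternOf v₀ (shift v δ') η'))

/-- `v` has `n` pattern changes for `δ` (for `n ≥ 1`): `δ = δ₁ + … + δ_n` with each
`δ_j > 0` and `v + δ₁ + … + δ_j` has one pattern change for `δ_{j+1}`. -/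
def NChanges {k : ℕ} (v₀ v : Val k) (n : ℕ) (δ : ℝ) : Prop :=
  ∃ d : ℕ → ℝ, (∀ j < n, 0 < d j) ∧ (∑ j ∈ Finset.range n, d j) = δ ∧
    ∀ j < n, OneChange v₀ (shift v (∑ j' ∈ Finset.range j, d j')) (d j)

/-! ## Clock constraints -/

/-- Comparison operators `<, ≤, =, ≥, >`. -/
inductive CCmp | lt | le | eq | ge | gt

/-- Evaluation of a comparison operator on reals. -/
def CCmp.evalR : CCmp → ℝ → ℝ → Prop
  | .lt, a, b => a < b
  | .le, a, b => a ≤ b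
  | .eq, a, b => a = b
  | .ge, a, b => a ≥ b
  | .gt, a, b => a > b

/-- Clock constraints over the clocks `x_1, …, x_k` (indexed by `Fin k`, clock
`x_{i+1}` for `i : Fin k`): Boolean combinations of `x_i - x_j # d` and `x_i # d`. -/
inductive CC (k : ℕ)
  | diff (i j : Fin k) (op : CCmp) (d : ℕ) : CC k
  | single (i : Fin k) (op : CCmp) (d : ℕ) : CC k
  | not (c : CC k) : CC k
  | and (c₁ c₂ : CC k) : CC k

/-- `v ∈ c` : the valuation `v` satisfies the clock constraint `c`. -/
def CC.sat {k : ℕ} (v : Val k) : CC k → Prop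
  | .diff i j op d => op.evalR (v i.succ - v j.succ) (d : ℝ)
  | .single i op d => op.evalR (v i.succ) (d : ℝ)
  | .not c => ¬ c.sat v
  | .and c₁ c₂ => c₁.sat v ∧ c₂.sat v

/-- The position (in `η`) of an index `x ∈ K⁰ ∪ K¹`. -/
def posOf {k : ℕ} (η : PatSeq k) (x : Fin (k+1) × Bool) : ℕ :=
  η.findIdx fun p => decide (x ∈ p)

/-- The truth value, given by pattern `η`, of the fractional ordering
`fract(x_a) > fract(x_b)`. -/
def fracGtP {k : ℕ} (η : PatSeq k) (a b : Fin (k+1)) : Prop :=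
  let i := posOf η ((0 : Fin (k+1)), true)
  let m₁ := posOf η (a, true)
  let m₂ := posOf η (b, true)
  (m₁ < i ∧ i ≤ m₂) ∨ (m₂ < m₁ ∧ m₁ < i) ∨ (i ≤ m₂ ∧ m₂ < m₁)

/-- The truth value, given by pattern `η`, of `fract(x_a) = fract(x_b)`. -/
def fracEqP {k : ℕ} (η : PatSeq k) (a b : Fin (k+1)) : Prop :=
  posOf η (a, true) = posOf η (b, true)

/-- The truth value, given by pattern `η`, of `fract(x_a) = 0`. -/
def fracZeroP {k : ℕ} (η : PatSeq k) (a : Fin (k+1)) : Prop :=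
  posOf η (a, true) = posOf η ((0 : Fin (k+1)), true)

/-- `u ∈ c^η` : the discrete valuation `u` satisfies the constraint `c^η`, obtained by
rewriting `c` as `I(c)` over integral parts and fractional orderings and substituting the
truth values of the fractional orderings determined by the pattern `η`. -/
def CC.satP {k : ℕ} (η : PatSeq k) (u : DVal k) : CC k → Prop
  | .diff i j op d =>
      let I : ℤ := (u i.succ : ℤ) - (u j.succ : ℤ)
      (match op with
      | .lt => I < d ∨ (I = d ∧ fracGtP η j.succ i.succ)
      | .le => I < d ∨ (I = d ∧ (fracGtP η j.succ i.succ ∨ fracEqP η i.succ j.succ))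
      | .eq => I = d ∧ fracEqP η i.succ j.succ
      | .ge => I > d ∨ (I = d ∧ (fracGtP η i.succ j.succ ∨ fracEqP η i.succ j.succ))
      | .gt => I > d ∨ (I = d ∧ fracGtP η i.succ j.succ))
  | .single i op d =>
      let I : ℤ := (u i.succ : ℤ)
      (match op with
      | .lt => I < d
      | .le => I < d ∨ (I = d ∧ fracZeroP η i.succ)
      | .eq => I = d ∧ fracZeroP η i.succ
      | .ge => I ≥ d
      | .gt => I > d ∨ (I = d ∧ ¬ fracZeroP η i.succ))
  | .not c => ¬ c.satP η u
  | .and c₁ c₂ => c₁.satP η u ∧ c₂.satP η u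

/-! ## Pushdown timed automata -/

/-- A pushdown timed automaton `⟨S, {x₁,…,x_k}, Inv, R, Γ, PD⟩`:
`Inv` assigns an invariant to each state, `R s s' = (Rc s s', Rr s s')` assigns a reset
condition and a set of clock resets (a subset of `K⁺`) to each edge, and
`PD s s' = (PDa s s', PDw s s')` assigns a stack operation to each edge. -/
structure PTA (k : ℕ) (S : Type) (Γ : Type) where
  Inv : S → CC k
  Rc : S → S → CC k
  Rr : S → S → Finset (Fin (k+1))
  hRr : ∀ s s', (0 : Fin (k+1)) ∉ Rr s s'
  PDa : S → S → Γ
  PDw : S → S → List Γ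

/-- A configuration `(s, v, w)` of a PTA. -/
abbrev Config (k : ℕ) (S Γ : Type) := S × Val k × List Γ

/-- The one-step transition relation `→_A` of a PTA. -/
def Step {k : ℕ} {S Γ : Type} (A : PTA k S Γ) (c₁ c₂ : Config k S Γ) : Prop :=
  -- progress transition
  (c₁.1 = c₂.1 ∧ c₁.2.2 = c₂.2.2 ∧
    ∃ δ : ℝ, 0 < δ ∧ c₂.2.1 = shift c₁.2.1 δ ∧
      ∀ δ', 0 ≤ δ' → δ' ≤ δ → (A.Inv c₁.1).sat (shift c₁.2.1 δ')) ∨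
  -- reset transition
  ((A.Inv c₁.1).sat c₁.2.1 ∧ (A.Rc c₁.1 c₂.1).sat c₁.2.1 ∧
    c₂.2.1 = resetVal (A.Rr c₁.1 c₂.1) c₁.2.1 ∧ (A.Inv c₂.1).sat c₂.2.1 ∧
    ∃ w : List Γ, c₁.2.2 = A.PDa c₁.1 c₂.1 :: w ∧ c₂.2.2 = A.PDw c₁.1 c₂.1 ++ w)

/-- `→*_A`, the transitive closure of `→_A`. -/
def Reach {k : ℕ} {S Γ : Type} (A : PTA k S Γ) : Config k S Γ → Config k S Γ → Prop :=
  Relation.TransGen (Step A)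

/-- `(s₀,u₀,w₀) →*_{A,η} (s₁,u₁,w₁)`. -/
def ReachPat {k : ℕ} {S Γ : Type} (A : PTA k S Γ) (η : PatSeq k)
    (s₀ : S) (u₀ : DVal k) (w₀ : List Γ) (s₁ : S) (u₁ : DVal k) (w₁ : List Γ) : Prop :=
  ∃ v₀ v₁ : Val k, IsVal v₀ ∧ IsVal v₁ ∧ v₀ 0 = 0 ∧
    intPart v₀ = u₀ ∧ intPart v₁ = u₁ ∧ PatternOf v₀ v₁ η ∧
    Reach A (s₀, v₀, w₀) (s₁, v₁, w₁)

/-! ## The pattern graph -/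

/-- A configuration `(s, η, u, w)` of the pattern graph. -/
abbrev GConfig (k : ℕ) (S Γ : Type) := S × PatSeq k × DVal k × List Γ

/-- The one-step transition relation `→_G` of the pattern graph `G` of a PTA `A`,
through progress edges, stay edges and reset edges. -/
def GStep {k : ℕ} {S Γ : Type} (A : PTA k S Γ) (c₁ c₂ : GConfig k S Γ) : Prop :=
  -- progress edge
  (c₁.1 = c₂.1 ∧ c₁.2.2.2 = c₂.2.2.2 ∧
    nextPair c₁.2.1 c₁.2.2.1 = (c₂.2.1, c₂.2.2.1) ∧
    (A.Inv c₁.1).satP c₁.2.1 c₁.2.2.1 ∧ (A.Inv c₁.1).satP c₂.2.1 c₂.2.2.1) ∨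
  -- stay edge
  (c₁ = c₂ ∧ IsMergePat c₁.2.1 ∧ (A.Inv c₁.1).satP c₁.2.1 c₁.2.2.1) ∨
  -- reset edge
  (resetPair (A.Rr c₁.1 c₂.1) c₁.2.1 c₁.2.2.1 = (c₂.2.1, c₂.2.2.1) ∧
    ((A.Rc c₁.1 c₂.1).and (A.Inv c₁.1)).satP c₁.2.1 c₁.2.2.1 ∧
    (A.Inv c₂.1).satP c₂.2.1 c₂.2.2.1 ∧
    ∃ w : List Γ, c₁.2.2.2 = A.PDa c₁.1 c₂.1 :: w ∧ c₂.2.2.2 = A.PDw c₁.1 c₂.1 ++ w)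

/-- `→*_G`, the transitive closure of `→_G`. -/
def GReach {k : ℕ} {S Γ : Type} (A : PTA k S Γ) : GConfig k S Γ → GConfig k S Γ → Prop :=
  Relation.TransGen (GStep A)

end PTApaper
namespace PTApaper

/-!
The fractional parts of clocks live on the circle, and a pattern records the cyclic order of
finitely many points on it. Equal patterns therefore come from an orientation-preserving
homeomorphism of the circle, that is, from an increasing bijection `φ` of `ℝ` commuting with integer
translations (a unit of `CircleDeg1Lift`), obtained by piecewise linear interpolation. Such a `φ`
acts on valuations by `v ↦ (i ↦ φ (v i - v 0) - φ (-v 0))`. The action preserves integral parts,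
patterns of pairs and clock constraints, because `φ s - φ t` and `s - t` always compare in the same
way with an integer; and it turns letting time pass into letting time pass, up to an increasing
reparametrization of the delay. Choosing `φ` to carry `(v₀¹, v₁)` to `(v₀², v₂)`, the valuation `v²`
is the image of `v¹`.
-/

/-! ### Interpolation by order automorphisms -/

section Interpolation

variable {K : Type*} [Field K] [LinearOrder K] [IsStrictOrderedRing K]

/-- The piecewise linear map which is the identity below `m` and has slope `c` above `m`. -/
def stretchAbove (m c t : K) : K := min t m + c * max (t - m) 0

theorem stretchAbove_of_le {m c t : K} (h : t ≤ m) : stretchAbove m c t = t := by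
  simp [stretchAbove, h]

theorem stretchAbove_of_ge {m c t : K} (h : m ≤ t) : stretchAbove m c t = m + c * (t - m) := by
  simp [stretchAbove, h]

theorem monotone_stretchAbove {m c : K} (hc : 0 ≤ c) : Monotone (stretchAbove m c) :=
  fun s t hst => by unfold stretchAbove; gcongr

theorem leftInverse_stretchAbove_inv {m c : K} (hc : 0 < c) :
    Function.LeftInverse (stretchAbove m c⁻¹) (stretchAbove m c) := fun t => by
  rcases le_total t m with h | h
  · rw [stretchAbove_of_le h, stretchAbove_of_le h]
  · rw [stretchAbove_of_ge h,
      stretchAbove_of_ge (le_add_of_nonneg_right (mul_nonneg hc.le (sub_nonneg.2 h)))]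
    simp [hc.ne']

theorem exists_orderIso_eq_self_of_le_map_eq {m s t : K} (hs : m < s) (ht : m < t) :
    ∃ e : K ≃o K, (∀ u ≤ m, e u = u) ∧ e s = t := by
  have hc : 0 < (t - m) / (s - m) := div_pos (sub_pos.2 ht) (sub_pos.2 hs)
  have hright : Function.LeftInverse (stretchAbove m ((t - m) / (s - m)))
      (stretchAbove m ((t - m) / (s - m))⁻¹) := by
    simpa only [inv_inv] using leftInverse_stretchAbove_inv (m := m) (inv_pos.2 hc)
  refine ⟨Equiv.toOrderIso ⟨_, _, leftInverse_stretchAbove_inv hc, hright⟩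
    (monotone_stretchAbove hc.le) (monotone_stretchAbove (inv_pos.2 hc).le),
    fun u hu => stretchAbove_of_le hu, ?_⟩
  change stretchAbove m _ s = t
  rw [stretchAbove_of_ge hs.le, div_mul_cancel₀ _ (sub_pos.2 hs).ne', add_sub_cancel]

theorem exists_orderIso_forall_map_eq {ι : Type*} [Finite ι] {x y : ι → K}
    (hxy : ∀ i j, x i < x j ↔ y i < y j) : ∃ e : K ≃o K, ∀ i, e (x i) = y i := by
  classical
  have hle : ∀ i j, x i ≤ x j → y i ≤ y j := fun i j h => not_lt.1 ((hxy j i).not.1 h.not_gt)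
  suffices h : ∀ s : Finset ι, ∃ e : K ≃o K, ∀ i ∈ s, e (x i) = y i by
    cases nonempty_fintype ι
    simpa using h Finset.univ
  intro s
  induction s using Finset.induction_on_max_value x with
  | empty => exact ⟨OrderIso.refl K, by simp⟩
  | insert a s _ hmax ih =>
    obtain ⟨e, he⟩ := ih
    rcases s.eq_empty_or_nonempty with rfl | hs
    · exact ⟨OrderIso.addRight (y a - x a), by simp⟩
    obtain ⟨b, hb, hbmax⟩ := s.exists_max_image x hs
    simp only [Finset.forall_mem_insert]
    rcases (hmax b hb).eq_or_lt with hba | hba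
    · exact ⟨e, by rw [← hba, he b hb]; exact (hle _ _ hba.le).antisymm (hle _ _ hba.ge), he⟩
    · obtain ⟨g, hg, hga⟩ := exists_orderIso_eq_self_of_le_map_eq
        ((he b hb).symm.trans_lt (e.strictMono hba)) ((hxy b a).1 hba)
      exact ⟨e.trans g, hga, fun i hi => by
        rw [OrderIso.trans_apply, he i hi, hg _ (hle i b (hbmax i hi))]⟩

end Interpolation

/-! ### Lifts of circle homeomorphisms -/

section Periodize

/-- The periodic extension of the restriction of `f` to `[0, 1)`. -/
noncomputable def periodize (f : ℝ ≃o ℝ) (t : ℝ) : ℝ := f (Int.fract t) + ⌊t⌋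

variable {f : ℝ ≃o ℝ}

theorem periodize_of_mem_Ico {t : ℝ} (ht : t ∈ Set.Ico 0 1) : periodize f t = f t := by
  simp [periodize, Int.fract_eq_self.2 ht, Int.floor_eq_zero_iff.2 ht]

theorem periodize_add_one (t : ℝ) : periodize f (t + 1) = periodize f t + 1 := by
  simp [periodize, add_assoc]

theorem map_fract_mem_Ico (h0 : f 0 = 0) (h1 : f 1 = 1) (t : ℝ) :
    f (Int.fract t) ∈ Set.Ico 0 1 :=
  ⟨h0.symm.trans_le (f.monotone (Int.fract_nonneg t)),
    (f.strictMono (Int.fract_lt_one t)).trans_eq h1⟩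

theorem monotone_periodize (h0 : f 0 = 0) (h1 : f 1 = 1) : Monotone (periodize f) := by
  intro s t hst
  rcases (Int.floor_mono hst).eq_or_lt with hfloor | hfloor
  · have hfract : Int.fract s ≤ Int.fract t := by
      unfold Int.fract; rw [hfloor]; gcongr
    unfold periodize
    rw [hfloor]
    gcongr
  · have hfloor' : (⌊s⌋ : ℝ) + 1 ≤ ⌊t⌋ := by exact_mod_cast hfloor
    unfold periodize
    linarith [(map_fract_mem_Ico h0 h1 s).2, (map_fract_mem_Ico h0 h1 t).1]

theorem leftInverse_periodize_symm (h0 : f 0 = 0) (h1 : f 1 = 1) :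
    Function.LeftInverse (periodize f.symm) (periodize f) := fun t => by
  have hmem := map_fract_mem_Ico h0 h1 t
  simp only [periodize, Int.fract_add_intCast, Int.floor_add_intCast, Int.fract_eq_self.2 hmem,
    Int.floor_eq_zero_iff.2 hmem, OrderIso.symm_apply_apply, zero_add, Int.fract_add_floor]

/-- The periodic extension of an order automorphism fixing `0` and `1`, as the lift of a circle
homeomorphism. -/
noncomputable def periodizeUnit (f : ℝ ≃o ℝ) (h0 : f 0 = 0) (h1 : f 1 = 1) :
    CircleDeg1Liftˣ where
  val := ⟨⟨periodize f, monotone_periodize h0 h1⟩, periodize_add_one⟩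
  inv := ⟨⟨periodize f.symm, monotone_periodize (f.symm_apply_eq.2 h0.symm)
    (f.symm_apply_eq.2 h1.symm)⟩, periodize_add_one⟩
  val_inv := CircleDeg1Lift.ext <| leftInverse_periodize_symm (f := f.symm)
    (f.symm_apply_eq.2 h0.symm) (f.symm_apply_eq.2 h1.symm)
  inv_val := CircleDeg1Lift.ext <| leftInverse_periodize_symm h0 h1

theorem exists_circleDeg1Lift_forall_map_eq {ι : Type*} [Finite ι] {x y : ι → ℝ}
    (hx : ∀ i, x i ∈ Set.Ico 0 1) (hy : ∀ i, y i < 1) (hxy : ∀ i j, x i < x j ↔ y i < y j)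
    {o : ι} (hxo : x o = 0) (hyo : y o = 0) : ∃ φ : CircleDeg1Liftˣ, ∀ i, φ (x i) = y i := by
  -- `none` is an extra node which pins the right endpoint `1`
  obtain ⟨f, hf⟩ := exists_orderIso_forall_map_eq (ι := Option ι)
    (x := fun a => a.elim 1 x) (y := fun a => a.elim 1 y) (by
      rintro (_ | i) (_ | j)
      · simp
      · simp [(hx j).2.not_gt, (hy j).not_gt]
      · simp [(hx i).2, hy i]
      · exact hxy i j)
  have hf0 : f 0 = 0 := by simpa [hxo, hyo] using hf (some o)
  exact ⟨periodizeUnit f hf0 (hf none),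
    fun i => (periodize_of_mem_Ico (hx i)).trans (hf (some i))⟩

end Periodize

section CircleLift

variable (φ : CircleDeg1Liftˣ)

theorem circleLift_lt_iff {s t : ℝ} : φ s < φ t ↔ s < t :=
  (CircleDeg1Lift.toOrderIso φ).lt_iff_lt

theorem circleLift_le_iff {s t : ℝ} : φ s ≤ φ t ↔ s ≤ t :=
  (CircleDeg1Lift.toOrderIso φ).le_iff_le

theorem circleLift_injective : Function.Injective φ :=
  (CircleDeg1Lift.toOrderIso φ).injective

theorem circleLift_sub_lt_intCast_iff {s t : ℝ} {n : ℤ} : φ s - φ t < n ↔ s - t < n := by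
  rw [sub_lt_iff_lt_add', sub_lt_iff_lt_add', ← CircleDeg1Lift.map_add_int, circleLift_lt_iff]

theorem intCast_lt_circleLift_sub_iff {s t : ℝ} {n : ℤ} : n < φ s - φ t ↔ n < s - t := by
  rw [lt_sub_iff_add_lt', lt_sub_iff_add_lt', ← CircleDeg1Lift.map_add_int, circleLift_lt_iff]

theorem floor_circleLift_sub (s t : ℝ) : ⌊φ s - φ t⌋ = ⌊s - t⌋ :=
  eq_of_forall_le_iff fun n => by
    rw [Int.le_floor, Int.le_floor, ← not_lt, ← not_lt, circleLift_sub_lt_intCast_iff]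

theorem fract_circleLift_sub_map_zero (t : ℝ) :
    Int.fract (φ t - φ 0) = φ (Int.fract t) - φ 0 := by
  have hfloor : ⌊φ t - φ 0⌋ = ⌊t⌋ := by simpa using floor_circleLift_sub φ t 0
  rw [Int.fract, Int.fract, hfloor, CircleDeg1Lift.map_sub_int]
  ring

end CircleLift

/-! ### Patterns -/

section LevelSets

variable {α β : Type*} [Fintype α] [LinearOrder β]

/-- The fibres of `r` in increasing order of their values: the pattern induced by `r`. -/
def levelSets (r : α → β) : List (Finset α) :=
  (Finset.univ.image r).sort.map fun t => Finset.univ.filter fun a => r a = t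

variable {r : α → β}

theorem length_levelSets_le : (levelSets r).length ≤ Fintype.card α := by
  simpa [levelSets] using Finset.card_image_le (s := Finset.univ) (f := r)

theorem nonempty_of_mem_levelSets {p : Finset α} (hp : p ∈ levelSets r) : p.Nonempty := by
  obtain ⟨a, rfl⟩ : ∃ a, Finset.univ.filter (fun b => r b = r a) = p := by
    simpa [levelSets] using hp
  exact ⟨a, by simp⟩

theorem exists_mem_levelSets (r : α → β) (a : α) : ∃ p ∈ levelSets r, a ∈ p :=
  ⟨Finset.univ.filter fun b => r b = r a, by simp [levelSets]⟩

theorem lt_iff_of_mem_get_levelSets {m n : Fin (levelSets r).length} {a b : α}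
    (ha : a ∈ (levelSets r).get m) (hb : b ∈ (levelSets r).get n) :
    r a < r b ↔ (m : ℕ) < n := by
  rw [List.get_eq_getElem] at ha hb
  simp only [levelSets, List.getElem_map, Finset.mem_filter, Finset.mem_univ, true_and] at ha hb
  rw [ha, hb]
  exact (Finset.sortedLT_sort (Finset.univ.image r)).strictMono_get.lt_iff_lt
    (a := ⟨m, by simpa [levelSets] using m.2⟩) (b := ⟨n, by simpa [levelSets] using n.2⟩)

theorem pairwise_disjoint_levelSets (r : α → β) : (levelSets r).Pairwise Disjoint := by
  rw [List.pairwise_iff_get]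
  exact fun m n hmn => Finset.disjoint_left.2 fun a ham han =>
    lt_irrefl (r a) ((lt_iff_of_mem_get_levelSets ham han).2 hmn)

theorem mem_getD_zero_levelSets {a : α} (hmin : ∀ b, r a ≤ r b) :
    a ∈ (levelSets r).getD 0 ∅ := by
  obtain ⟨p, hp, hap⟩ := exists_mem_levelSets r a
  obtain ⟨m, rfl⟩ := List.get_of_mem hp
  have hlen : 0 < (levelSets r).length := m.pos
  obtain ⟨b, hb⟩ := nonempty_of_mem_levelSets ((levelSets r).get_mem ⟨0, hlen⟩)
  have hm : m = ⟨0, hlen⟩ := Fin.ext <| Nat.eq_zero_of_not_pos fun hpos =>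
    ((lt_iff_of_mem_get_levelSets hb hap).2 hpos).not_ge (hmin b)
  subst hm
  rwa [List.getD_eq_getElem _ _ hlen]

end LevelSets

section Valuation

variable {k : ℕ} {v₀ v w₀ w : Val k}

/-- The relative representation of `v` before reduction modulo `1`: its fractional parts are
`relFract v`, and unlike these it is given by a formula without nested fractional parts. -/
def relLift (v : Val k) : Val k := fun i => if i = 0 then -v 0 else v i - v 0

theorem relFract_eq_fract_relLift (v : Val k) (i : Fin (k + 1)) :
    relFract v i = Int.fract (relLift v i) := by
  have hzero : Int.fract (1 - Int.fract (v 0)) = Int.fract (-v 0) :=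
    Int.fract_eq_fract.2 ⟨1 + ⌊v 0⌋, by rw [Int.fract]; push_cast; ring⟩
  unfold relFract relLift
  split_ifs
  · exact hzero
  · exact Int.fract_eq_fract.2 ⟨-⌊v i⌋ - ⌊-v 0⌋, by
      rw [hzero, Int.fract, Int.fract]; push_cast; ring⟩

theorem relFract_mem_Ico (v : Val k) (i : Fin (k + 1)) : relFract v i ∈ Set.Ico 0 1 := by
  rw [relFract_eq_fract_relLift]
  exact ⟨Int.fract_nonneg _, Int.fract_lt_one _⟩

theorem Initial.relFract_zero (hv : Initial v) : relFract v 0 = 0 := by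
  rw [relFract_eq_fract_relLift, relLift, if_pos rfl, show v 0 = 0 from hv, neg_zero,
    Int.fract_zero]

theorem floor_eq_of_intPart_eq (hv : IsVal v) (hw : IsVal w) (h : intPart v = intPart w)
    (i : Fin (k + 1)) : ⌊v i⌋ = ⌊w i⌋ := by
  have hi : ⌊v i⌋.toNat = ⌊w i⌋.toNat := congrFun h i
  rwa [← Int.toNat_of_nonneg (Int.floor_nonneg.2 (hv i)),
    ← Int.toNat_of_nonneg (Int.floor_nonneg.2 (hw i)), Nat.cast_inj]

theorem eq_of_intPart_eq_of_relFract_eq (hv : IsVal v) (hw : IsVal w)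
    (hint : intPart v = intPart w) (hrel : relFract v = relFract w) : v = w := by
  have eq_of_fract_eq (i) (h : Int.fract (v i) = Int.fract (w i)) : v i = w i := by
    rw [← Int.fract_add_floor (v i), ← Int.fract_add_floor (w i), h,
      floor_eq_of_intPart_eq hv hw hint]
  have hlift (i) : ∃ n : ℤ, relLift v i - relLift w i = n := by
    rw [← Int.fract_eq_fract, ← relFract_eq_fract_relLift, ← relFract_eq_fract_relLift, hrel]
  have hzero : v 0 = w 0 := by
    obtain ⟨n, hn⟩ := hlift 0
    simp only [relLift, if_true] at hn
    exact eq_of_fract_eq 0 (Int.fract_eq_fract.2 ⟨-n, by push_cast; linarith⟩)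
  funext i
  by_cases hi : i = 0
  · rw [hi, hzero]
  · obtain ⟨n, hn⟩ := hlift i
    simp only [relLift, if_neg hi, hzero, sub_sub_sub_cancel_right] at hn
    exact eq_of_fract_eq i (Int.fract_eq_fract.2 ⟨n, hn⟩)

/-- The relative fractional parts of a pair of valuations, as a function on `K⁰ ∪ K¹`. -/
noncomputable def pairRelFract (v₀ v : Val k) (x : Fin (k + 1) × Bool) : ℝ :=
  relFract (bval v₀ v x.2) x.1

theorem hasPatternOrd_of_lt_iff {η : PatSeq k}
    (h : ∀ m n : Fin η.length, ∀ x ∈ η.get m, ∀ y ∈ η.get n,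
      (pairRelFract v₀ v x < pairRelFract v₀ v y ↔ (m : ℕ) < n)) :
    HasPatternOrd v₀ v η := by
  intro m n b c i j hi hj
  have hlt := h m n _ hi _ hj
  have hgt := h n m _ hj _ hi
  refine ⟨?_, hlt⟩
  change pairRelFract v₀ v (i, b) = pairRelFract v₀ v (j, c) ↔ m = n
  rw [Fin.ext_iff]
  simp only [le_antisymm_iff, ← not_lt, hlt, hgt]

theorem Initial.patternOf_levelSets (hv₀ : Initial v₀) (v : Val k) :
    PatternOf v₀ v (levelSets (pairRelFract v₀ v)) := by
  refine ⟨⟨?_, fun p => nonempty_of_mem_levelSets, pairwise_disjoint_levelSets _,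
    mem_getD_zero_levelSets fun x => ?_, exists_mem_levelSets _⟩,
    hasPatternOrd_of_lt_iff fun m n x hx y hy => lt_iff_of_mem_get_levelSets hx hy⟩
  · simpa [mul_comm] using length_levelSets_le (r := pairRelFract v₀ v)
  · exact hv₀.relFract_zero.trans_le (relFract_mem_Ico _ _).1

theorem PatternOf.of_lt_iff {η : PatSeq k} (hη : PatternOf v₀ v η)
    (h : ∀ x y, pairRelFract w₀ w x < pairRelFract w₀ w y ↔
      pairRelFract v₀ v x < pairRelFract v₀ v y) :
    PatternOf w₀ w η :=
  ⟨hη.1, hasPatternOrd_of_lt_iff fun m n x hx y hy =>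
    (h x y).trans (hη.2 m n x.2 y.2 x.1 y.1 hx hy).2⟩

theorem PairEquiv.pairRelFract_lt_iff (h : PairEquiv v₀ v w₀ w) (x y : Fin (k + 1) × Bool) :
    pairRelFract v₀ v x < pairRelFract v₀ v y ↔ pairRelFract w₀ w x < pairRelFract w₀ w y := by
  obtain ⟨⟨η, ⟨hη, hv⟩, ⟨-, hw⟩⟩, -, -⟩ := h
  obtain ⟨-, -, -, -, hcover⟩ := hη
  obtain ⟨p, hp, hx⟩ := hcover x
  obtain ⟨q, hq, hy⟩ := hcover y
  obtain ⟨m, rfl⟩ := List.get_of_mem hp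
  obtain ⟨n, rfl⟩ := List.get_of_mem hq
  exact (hv m n _ _ _ _ hx hy).2.trans (hw m n _ _ _ _ hx hy).2.symm

/-! ### Transporting valuations along circle homeomorphisms -/

/-- The action of the lift `φ` of a circle homeomorphism on valuations. On the lifted relative
representation it is `t ↦ φ t - φ 0`. -/
def transport (φ : CircleDeg1Liftˣ) (v : Val k) : Val k := fun i => φ (v i - v 0) - φ (-v 0)

variable (φ : CircleDeg1Liftˣ)

theorem transport_injective : Function.Injective (transport φ : Val k → Val k) := by
  intro v w h
  have hzero : v 0 = w 0 := by
    have h0 := congrFun h 0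
    simp only [transport, sub_self, sub_right_inj] at h0
    exact neg_injective (circleLift_injective φ h0)
  funext i
  have hi := congrFun h i
  simp only [transport, hzero, sub_left_inj] at hi
  exact sub_left_injective (circleLift_injective φ hi)

theorem initial_transport_iff : Initial (transport φ v) ↔ Initial v := by
  simp only [Initial, transport, sub_self, sub_eq_zero, (circleLift_injective φ).eq_iff,
    zero_eq_neg]

theorem IsVal.transport (hv : IsVal v) : IsVal (transport φ v) := fun i =>
  sub_nonneg.2 <| (circleLift_le_iff φ).2 <| by linarith [hv i]

theorem intPart_transport (v : Val k) : intPart (transport φ v) = intPart v := by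
  funext i
  simp only [intPart, transport, floor_circleLift_sub, sub_neg_eq_add, sub_add_cancel]

theorem relFract_transport (v : Val k) (i : Fin (k + 1)) :
    relFract (transport φ v) i = φ (relFract v i) - φ 0 := by
  rw [relFract_eq_fract_relLift, relFract_eq_fract_relLift, ← fract_circleLift_sub_map_zero]
  congr 1
  unfold relLift transport
  split_ifs <;> simp

theorem pairRelFract_transport (v₀ v : Val k) (x : Fin (k + 1) × Bool) :
    pairRelFract (transport φ v₀) (transport φ v) x = φ (pairRelFract v₀ v x) - φ 0 := by
  obtain ⟨i, _ | _⟩ := x <;> exact relFract_transport φ _ i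

theorem Initial.pairEquiv_transport (hv₀ : Initial v₀) (v : Val k) :
    PairEquiv v₀ v (transport φ v₀) (transport φ v) := by
  have hη := hv₀.patternOf_levelSets v
  refine ⟨⟨_, hη, hη.of_lt_iff fun x y => ?_⟩, (intPart_transport φ v₀).symm,
    (intPart_transport φ v).symm⟩
  rw [pairRelFract_transport, pairRelFract_transport, sub_lt_sub_iff_right, circleLift_lt_iff]

theorem PairEquiv.exists_transport_eq (h : PairEquiv v₀ v w₀ w) (hv₀ : IsVal v₀) (hv : IsVal v)
    (hw₀ : IsVal w₀) (hw : IsVal w) (hiv : Initial v₀) (hiw : Initial w₀) :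
    ∃ φ : CircleDeg1Liftˣ, transport φ v₀ = w₀ ∧ transport φ v = w := by
  obtain ⟨φ, hφ⟩ := exists_circleDeg1Lift_forall_map_eq (x := pairRelFract v₀ v)
    (y := pairRelFract w₀ w) (fun x => relFract_mem_Ico _ _) (fun x => (relFract_mem_Ico _ _).2)
    h.pairRelFract_lt_iff (o := (0, false)) hiv.relFract_zero hiw.relFract_zero
  have hφ0 : φ 0 = 0 := by
    simpa only [pairRelFract, bval, hiv.relFract_zero, hiw.relFract_zero] using hφ (0, false)
  obtain ⟨-, hint₀, hint⟩ := h
  refine ⟨φ, eq_of_intPart_eq_of_relFract_eq (hv₀.transport φ) hw₀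
      ((intPart_transport φ v₀).trans hint₀) (funext fun i => ?_),
    eq_of_intPart_eq_of_relFract_eq (hv.transport φ) hw
      ((intPart_transport φ v).trans hint) (funext fun i => ?_)⟩
  · rw [relFract_transport, hφ0, sub_zero]
    exact hφ (i, false)
  · rw [relFract_transport, hφ0, sub_zero]
    exact hφ (i, true)

theorem evalR_circleLift_sub_iff (op : CCmp) (s t : ℝ) (d : ℕ) :
    op.evalR (φ s - φ t) d ↔ op.evalR (s - t) d := by
  have hlt : φ s - φ t < d ↔ s - t < d := circleLift_sub_lt_intCast_iff φ (n := d)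
  have hgt : d < φ s - φ t ↔ d < s - t := intCast_lt_circleLift_sub_iff φ (n := d)
  cases op <;> simp only [CCmp.evalR, gt_iff_lt, ge_iff_le, le_antisymm_iff, ← not_lt, hlt, hgt]

theorem sat_transport_iff (c : CC k) : c.sat (transport φ v) ↔ c.sat v := by
  induction c with
  | diff i j op d =>
    simpa only [CC.sat, transport, sub_sub_sub_cancel_right] using
      evalR_circleLift_sub_iff φ op (v i.succ - v 0) (v j.succ - v 0) d
  | single i op d =>
    simpa only [CC.sat, transport, sub_neg_eq_add, sub_add_cancel] using
      evalR_circleLift_sub_iff φ op (v i.succ - v 0) (-v 0) d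
  | not c ih => simp only [CC.sat, ih]
  | and c₁ c₂ ih₁ ih₂ => simp only [CC.sat, ih₁, ih₂]

/-- The time change of delays: `transport φ` carries a delay `δ` from `v` to the delay
`delayIso φ v δ` from `transport φ v`. -/
def delayIso (v : Val k) : ℝ ≃o ℝ where
  toFun δ := φ (-v 0) - φ (-(v 0 + δ))
  invFun ε := -(φ⁻¹ : CircleDeg1Liftˣ) (φ (-v 0) - ε) - v 0
  left_inv δ := by simp
  right_inv ε := by simp
  map_rel_iff' {δ ε} := by
    simp only [Equiv.coe_fn_mk, sub_le_sub_iff_left, circleLift_le_iff, neg_le_neg_iff,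
      add_le_add_iff_left]

theorem delayIso_zero (v : Val k) : delayIso φ v 0 = 0 := by
  simp [delayIso]

theorem transport_shift (v : Val k) (δ : ℝ) :
    transport φ (shift v δ) = shift (transport φ v) (delayIso φ v δ) := by
  funext i
  simp only [transport, shift, delayIso, RelIso.coe_fn_mk, Equiv.coe_fn_mk,
    add_sub_add_right_eq_sub, sub_add_sub_cancel]

theorem forall_sat_shift_transport_iff (v : Val k) (δ : ℝ) (c : CC k) :
    (∀ ε, 0 ≤ ε → ε ≤ delayIso φ v δ → c.sat (shift (transport φ v) ε)) ↔
      ∀ ε, 0 ≤ ε → ε ≤ δ → c.sat (shift v ε) := by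
  rw [(delayIso φ v).surjective.forall]
  refine forall_congr' fun ε => ?_
  rw [← transport_shift, sat_transport_iff, OrderIso.le_iff_le]
  nth_rewrite 1 [← delayIso_zero φ v]
  rw [OrderIso.le_iff_le]

end Valuation

/-- Lemma `backwards`(1). Let `(va,vb) ≈ (vc,vd)` be initialized
pairs. For any `δ₁ ≥ 0` and any clock valuation `v1` with `v1 + δ₁ = vb`, there exist
`δ₂ ≥ 0` and a clock valuation `v2` with: (1.1) `v2 + δ₂ = vd` and `(va,v1) ≈ (vc,v2)`;
(1.2) `v1` is initial iff `v2` is initial, `v1 = va` iff `v2 = vc`, and for every clock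
constraint `c`, `v1 ∈ c` iff `v2 ∈ c` (and likewise `vb ∈ c` iff `vd ∈ c`);
(1.3) for every clock constraint `c`: `∀ 0 ≤ δ' ≤ δ₁, v1+δ' ∈ c` iff
`∀ 0 ≤ δ' ≤ δ₂, v2+δ' ∈ c`. -/
theorem backwards_progress (k : ℕ) (hk : 1 ≤ k) (va vb vc vd : Val k)
    (hva : IsVal va) (hvb : IsVal vb) (hvc : IsVal vc) (hvd : IsVal vd)
    (h0a : Initial va) (h0c : Initial vc)
    (heq : PairEquiv va vb vc vd)
    (δ₁ : ℝ) (hδ₁ : 0 ≤ δ₁)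
    (v1 : Val k) (hv1 : IsVal v1) (hshift : shift v1 δ₁ = vb) :
    ∃ δ₂ : ℝ, 0 ≤ δ₂ ∧ ∃ v2 : Val k, IsVal v2 ∧
      shift v2 δ₂ = vd ∧ PairEquiv va v1 vc v2 ∧
      (Initial v1 ↔ Initial v2) ∧
      (v1 = va ↔ v2 = vc) ∧
      (∀ c : CC k, (c.sat v1 ↔ c.sat v2) ∧ (c.sat vb ↔ c.sat vd)) ∧
      (∀ c : CC k,
        (∀ δ', 0 ≤ δ' → δ' ≤ δ₁ → c.sat (shift v1 δ')) ↔
        (∀ δ', 0 ≤ δ' → δ' ≤ δ₂ → c.sat (shift v2 δ'))) := by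
  obtain ⟨φ, rfl, rfl⟩ := heq.exists_transport_eq hva hvb hvc hvd h0a h0c
  subst hshift
  have hδ₂ : 0 ≤ delayIso φ v1 δ₁ :=
    (delayIso_zero φ v1).symm.trans_le ((delayIso φ v1).monotone hδ₁)
  exact ⟨delayIso φ v1 δ₁, hδ₂, transport φ v1, hv1.transport φ, (transport_shift φ v1 δ₁).symm,
    h0a.pairEquiv_transport φ v1, (initial_transport_iff φ).symm,
    (transport_injective φ).eq_iff.symm,
    fun c => ⟨(sat_transport_iff φ c).symm, (sat_transport_iff φ c).symm⟩,
    fun c => (forall_sat_shift_transport_iff φ v1 δ₁ c).symm⟩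

end PTApaper
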